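/- Let p̄ ∈ ℝ^K be a probability vector with p̄_k > 0 for all k and Σ_k p̄_k = 1, let ρ > 0, and let c ∈ ℝ^K. Then sup{ Σ_{k=1}^K p_k c_k : p ∈ ℝ^K, p ≥ 0, Σ_k p_k = 1, Σ_k p_k log(p_k/p̄_k) ≤ ρ } = inf{ μ + ρν + ν·Σ_{k=1}^K p̄_k · exp((c_k − μ)/ν − 1) : μ ∈ ℝ, ν > 0 }. -/

import Mathlib

/-!
Weak duality is the Fenchel–Young inequality for `p ↦ p log (p / q)`, summed over the coordinates.
For the converse, tilt `p̄` exponentially: with `Z t = ∑ p̄ k exp (t c k)` and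
`p_t k = p̄ k exp (t c k) / Z t`, one has `KL(p_t, p̄) = t ∑ p_t k c k - log (Z t)`, while the dual
objective at `ν = 1 / t`, `μ = ν (log (Z t) - 1)` equals `(ρ + log (Z t)) / t`. Hence the duality
gap between the two is `(ρ - KL(p_t, p̄)) / t`. Given `ε > 0`, take `T = ρ / ε`. If
`KL(p_T, p̄) ≤ ρ` then `p_T` is feasible with gap at most `ρ / T = ε`; otherwise, since
`KL(p_0, p̄) = 0`, the intermediate value theorem gives `t ∈ (0, T)` with `KL(p_t, p̄) = ρ`
and the gap vanishes. No attainment of the supremum or the infimum is needed.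
-/

/-- The Fenchel–Young inequality for `p ↦ p log (p / q)`, whose conjugate is
`x ↦ q exp (x - 1)`. -/
lemma fenchel_young_kl {p q x : ℝ} (hp : 0 ≤ p) (hq : 0 < q) :
    p * x ≤ p * Real.log (p / q) + q * Real.exp (x - 1) := by
  rcases hp.eq_or_lt with rfl | hp
  · simp only [zero_mul, zero_add]; positivity
  · have hy : 0 < q * Real.exp (x - 1) / p := by positivity
    have h := Real.log_le_sub_one_of_pos hy
    rw [Real.log_div (by positivity) hp.ne', Real.log_mul hq.ne' (Real.exp_pos _).ne',
      Real.log_exp] at h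
    have h2 := mul_le_mul_of_nonneg_left h hp.le
    have h3 : p * (q * Real.exp (x - 1) / p - 1) = q * Real.exp (x - 1) - p := by
      field_simp
    rw [Real.log_div hp.ne' hq.ne']
    linarith

lemma kl_nonneg {K : ℕ} {p q : Fin K → ℝ} (hp : ∀ k, 0 ≤ p k) (hq : ∀ k, 0 < q k)
    (hps : ∑ k, p k = 1) (hqs : ∑ k, q k = 1) :
    0 ≤ ∑ k, p k * Real.log (p k / q k) := by
  have h : ∑ k, p k * 1 ≤ ∑ k, (p k * Real.log (p k / q k) + q k * Real.exp (1 - 1)) :=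
    Finset.sum_le_sum fun k _ => fenchel_young_kl (hp k) (hq k)
  simp only [Finset.sum_add_distrib, sub_self, Real.exp_zero, mul_one, hps, hqs] at h
  linarith

lemma kl_weak_duality {K : ℕ} {p q c : Fin K → ℝ} {ρ μ ν : ℝ} (hp : ∀ k, 0 ≤ p k)
    (hq : ∀ k, 0 < q k) (hps : ∑ k, p k = 1)
    (hkl : ∑ k, p k * Real.log (p k / q k) ≤ ρ) (hν : 0 < ν) :
    ∑ k, p k * c k ≤ μ + ρ * ν + ν * ∑ k, q k * Real.exp ((c k - μ) / ν - 1) := by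
  have h : ∑ k, p k * ((c k - μ) / ν) ≤
      ∑ k, (p k * Real.log (p k / q k) + q k * Real.exp ((c k - μ) / ν - 1)) :=
    Finset.sum_le_sum fun k _ => fenchel_young_kl (hp k) (hq k)
  have e : ν * ∑ k, p k * ((c k - μ) / ν) = ∑ k, p k * c k - μ := by
    calc ν * ∑ k, p k * ((c k - μ) / ν) = ∑ k, (p k * c k - p k * μ) := by
          rw [Finset.mul_sum]
          refine Finset.sum_congr rfl fun k _ => ?_
          field_simp
      _ = _ := by rw [Finset.sum_sub_distrib, ← Finset.sum_mul, hps, one_mul]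
  rw [Finset.sum_add_distrib] at h
  have h2 := mul_le_mul_of_nonneg_left h hν.le
  have h3 := mul_le_mul_of_nonneg_left hkl hν.le
  linarith

/-- The partition function `Z t = ∑ q k exp (t c k)` of the exponential family through `q`. -/
noncomputable def tiltZ {K : ℕ} (q c : Fin K → ℝ) (t : ℝ) : ℝ := ∑ k, q k * Real.exp (t * c k)

/-- The exponential tilt of `q` in direction `c` with parameter `t`. -/
noncomputable def tilt {K : ℕ} (q c : Fin K → ℝ) (t : ℝ) (k : Fin K) : ℝ :=
  q k * Real.exp (t * c k) / tiltZ q c t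

section Tilt

variable {K : ℕ} {q c : Fin K → ℝ}

lemma tiltZ_pos (hq : ∀ k, 0 < q k) (hqs : ∑ k, q k = 1) (t : ℝ) : 0 < tiltZ q c t := by
  have hne : (Finset.univ : Finset (Fin K)).Nonempty := by
    rw [Finset.nonempty_iff_ne_empty]
    intro h
    simp [h] at hqs
  exact Finset.sum_pos (fun k _ => mul_pos (hq k) (Real.exp_pos _)) hne

lemma tilt_pos (hq : ∀ k, 0 < q k) (hqs : ∑ k, q k = 1) (t : ℝ) (k : Fin K) :
    0 < tilt q c t k :=
  div_pos (mul_pos (hq k) (Real.exp_pos _)) (tiltZ_pos hq hqs t)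

lemma tilt_sum (hq : ∀ k, 0 < q k) (hqs : ∑ k, q k = 1) (t : ℝ) :
    ∑ k, tilt q c t k = 1 := by
  unfold tilt
  rw [← Finset.sum_div]
  exact div_self (tiltZ_pos hq hqs t).ne'

lemma tilt_kl (hq : ∀ k, 0 < q k) (hqs : ∑ k, q k = 1) (t : ℝ) :
    ∑ k, tilt q c t k * Real.log (tilt q c t k / q k) =
      t * ∑ k, tilt q c t k * c k - Real.log (tiltZ q c t) := by
  have hZ := tiltZ_pos (c := c) hq hqs t
  have hlog : ∀ k, Real.log (tilt q c t k / q k) = t * c k - Real.log (tiltZ q c t) := by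
    intro k
    have hk := (hq k).ne'
    have : tilt q c t k / q k = Real.exp (t * c k) / tiltZ q c t := by
      unfold tilt; field_simp
    rw [this, Real.log_div (Real.exp_pos _).ne' hZ.ne', Real.log_exp]
  simp only [hlog, mul_sub, Finset.sum_sub_distrib, ← Finset.sum_mul]
  rw [tilt_sum hq hqs, one_mul, Finset.mul_sum]
  congr 1
  exact Finset.sum_congr rfl fun k _ => by ring

lemma tilt_kl_continuous (hq : ∀ k, 0 < q k) (hqs : ∑ k, q k = 1) :
    Continuous fun t => ∑ k, tilt q c t k * Real.log (tilt q c t k / q k) := by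
  have hZ : Continuous (tiltZ q c) := by unfold tiltZ; fun_prop
  have hZ0 : ∀ t, tiltZ q c t ≠ 0 := fun t => (tiltZ_pos hq hqs t).ne'
  simp only [tilt_kl hq hqs]
  have ht : ∀ k, Continuous fun t => tilt q c t k := fun k => by
    unfold tilt
    exact Continuous.div (by fun_prop) hZ hZ0
  exact (continuous_id.mul (continuous_finsetSum _ fun k _ => (ht k).mul continuous_const)).sub
    (hZ.log hZ0)

lemma tilt_kl_zero (hq : ∀ k, 0 < q k) (hqs : ∑ k, q k = 1) :
    ∑ k, tilt q c 0 k * Real.log (tilt q c 0 k / q k) = 0 := by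
  rw [tilt_kl hq hqs]
  simp [tiltZ, hqs]

/-- At `ν = t⁻¹` and the minimising `μ = ν (log (Z t) - 1)`, the dual objective exceeds the primal
value of the tilt by exactly `(ρ - KL) / t`. -/
lemma tilt_gap (hq : ∀ k, 0 < q k) (hqs : ∑ k, q k = 1) (ρ : ℝ) {t : ℝ} (ht : 0 < t) :
    t⁻¹ * (Real.log (tiltZ q c t) - 1) + ρ * t⁻¹ +
        t⁻¹ * ∑ k, q k *
          Real.exp ((c k - t⁻¹ * (Real.log (tiltZ q c t) - 1)) / t⁻¹ - 1) =
      ∑ k, tilt q c t k * c k +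
        (ρ - ∑ k, tilt q c t k * Real.log (tilt q c t k / q k)) / t := by
  have hZ := tiltZ_pos (c := c) hq hqs t
  have h1 : ∑ k, q k *
      Real.exp ((c k - t⁻¹ * (Real.log (tiltZ q c t) - 1)) / t⁻¹ - 1) = 1 := by
    refine Eq.trans ?_ (tilt_sum (c := c) hq hqs t)
    refine Finset.sum_congr rfl fun k _ => ?_
    have : (c k - t⁻¹ * (Real.log (tiltZ q c t) - 1)) / t⁻¹ - 1 =
        t * c k - Real.log (tiltZ q c t) := by
      field_simp
      ring
    rw [this, Real.exp_sub, Real.exp_log hZ, tilt, mul_div_assoc]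
  rw [h1, tilt_kl hq hqs]
  field_simp
  ring

lemma exists_tilt_gap_le (hq : ∀ k, 0 < q k) (hqs : ∑ k, q k = 1) {ρ ε : ℝ} (hρ : 0 < ρ)
    (hε : 0 < ε) :
    ∃ t, 0 < t ∧ ∑ k, tilt q c t k * Real.log (tilt q c t k / q k) ≤ ρ ∧
      (ρ - ∑ k, tilt q c t k * Real.log (tilt q c t k / q k)) / t ≤ ε := by
  have hT : 0 < ρ / ε := div_pos hρ hε
  rcases le_or_gt (∑ k, tilt q c (ρ / ε) k * Real.log (tilt q c (ρ / ε) k / q k)) ρ with h | h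
  · refine ⟨ρ / ε, hT, h, ?_⟩
    have h0 := kl_nonneg (fun k => (tilt_pos (c := c) hq hqs (ρ / ε) k).le) hq
      (tilt_sum hq hqs _) hqs
    rw [div_le_iff₀ hT, mul_div_cancel₀ _ hε.ne']
    linarith
  · obtain ⟨t, ht, hgt⟩ := intermediate_value_Icc hT.le
      (tilt_kl_continuous (c := c) hq hqs).continuousOn
      (show ρ ∈ Set.Icc _ _ from ⟨by rw [tilt_kl_zero hq hqs]; exact hρ.le, h.le⟩)
    simp only at hgt
    have ht0 : t ≠ 0 := by
      rintro rfl
      rw [tilt_kl_zero hq hqs] at hgt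
      exact hρ.ne hgt
    refine ⟨t, lt_of_le_of_ne ht.1 ht0.symm, hgt.le, ?_⟩
    rw [hgt, sub_self, zero_div]
    exact hε.le

end Tilt

open Finset

/-- Lagrangian duality for the worst-case expectation over the KL ambiguity set
of radius `ρ > 0`: the supremum of `∑ k, p k * c k` over probability vectors `p`
with `KL(p, p̄) ≤ ρ` equals the infimum over `μ ∈ ℝ`, `ν > 0` of
`μ + ρν + ν ∑ k, p̄ k * exp ((c k - μ) / ν - 1)`.
(Note `Real.log 0 = 0`, which encodes the convention `0 * log 0 = 0`.) -/
theorem kl_duality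
    (K : ℕ) (pbar : Fin K → ℝ) (hpbar : ∀ k, 0 < pbar k) (hpbarsum : ∑ k, pbar k = 1)
    (ρ : ℝ) (hρ : 0 < ρ) (c : Fin K → ℝ) :
    sSup {s : ℝ | ∃ p : Fin K → ℝ, (∀ k, 0 ≤ p k) ∧ ∑ k, p k = 1 ∧
        (∑ k, p k * Real.log (p k / pbar k) ≤ ρ) ∧ s = ∑ k, p k * c k} =
      sInf {s : ℝ | ∃ μ ν : ℝ, 0 < ν ∧
        s = μ + ρ * ν + ν * ∑ k, pbar k * Real.exp ((c k - μ) / ν - 1)} := by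
  set P := {s : ℝ | ∃ p : Fin K → ℝ, (∀ k, 0 ≤ p k) ∧ ∑ k, p k = 1 ∧
        (∑ k, p k * Real.log (p k / pbar k) ≤ ρ) ∧ s = ∑ k, p k * c k} with hP
  set D := {s : ℝ | ∃ μ ν : ℝ, 0 < ν ∧
        s = μ + ρ * ν + ν * ∑ k, pbar k * Real.exp ((c k - μ) / ν - 1)} with hD
  have weak : ∀ s ∈ P, ∀ d ∈ D, s ≤ d := by
    rintro s ⟨p, hp, hps, hkl, rfl⟩ d ⟨μ, ν, hν, rfl⟩
    exact kl_weak_duality hp hpbar hps hkl hν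
  have strong : ∀ ε > 0, ∃ s ∈ P, ∃ d ∈ D, d ≤ s + ε := by
    intro ε hε
    obtain ⟨t, ht, hkl, hgap⟩ := exists_tilt_gap_le (c := c) hpbar hpbarsum hρ hε
    refine ⟨_, ⟨tilt pbar c t, fun k => (tilt_pos hpbar hpbarsum t k).le,
      tilt_sum hpbar hpbarsum t, hkl, rfl⟩, _,
      ⟨t⁻¹ * (Real.log (tiltZ pbar c t) - 1), t⁻¹, inv_pos.mpr ht, rfl⟩, ?_⟩
    rw [tilt_gap hpbar hpbarsum ρ ht]
    linarith
  obtain ⟨s₀, hs₀, d₀, hd₀, -⟩ := strong 1 one_pos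
  apply le_antisymm
  · exact csSup_le ⟨s₀, hs₀⟩ fun s hs => le_csInf ⟨d₀, hd₀⟩ fun d hd => weak s hs d hd
  · refine le_of_forall_pos_le_add fun ε hε => ?_
    obtain ⟨s, hs, d, hd, hsd⟩ := strong ε hε
    have h1 : sInf D ≤ d := csInf_le ⟨s₀, fun d hd => weak s₀ hs₀ d hd⟩ hd
    have h2 : s ≤ sSup P := le_csSup ⟨d₀, fun s hs => weak s hs d₀ hd₀⟩ hs
    linarith
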